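/- Suppose s'_1 ⪰ s_1 with s_1, s'_1 ∈ S^x, and couple the two trajectories on the same demand sequence. Let τ ∈ {2, …, L+1} be such that I'_t ≥ I_t for all 1 ≤ t < τ and I'_τ < I_τ. Then the dominance relation reverses at time τ: s_τ ⪰ s'_τ. -/

import Mathlib

/-!
Write `k` for the switching index of `s₁' ⪰ s₁`. At a time `τ ≤ L` the state consists of the
on-hand inventory, the not yet arrived initial entries `τ + 1, …, L` (positions `1, …, L - τ`,
`mrpTraj_pipeline`), and the sales of the times before `τ` (positions above `L - τ`,
`mrpTraj_sales`). Leftover inventory `I - min I d` and sales `min I d` are both monotone in `I`.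

* If `τ ≤ k`, the initial entry arriving at `τ` is at least as large in the primed system, as is
  the leftover, so `onHand_succ` gives `I'_τ ≥ I_τ`, a contradiction. Hence `k < τ`, and all the
  remaining initial entries are at most as large in the primed system.
* Before `τ` the primed sales are at least the unprimed ones.

So `L - τ` is a switching index for `s_τ ⪰ s'_τ`.
-/

open Finset

/-- One step of the base-stock Markov reward process: given state `s ∈ S^x`
(on-hand inventory `s 0` and pipeline `s 1, …, s L`) and demand `z`, the next
state is `(s 0 - min (s 0) z + s 1, s 2, …, s L, min (s 0) z)`. -/
noncomputable def mrpStep (L : ℕ) (s : Fin (L + 1) → ℝ) (z : ℝ) : Fin (L + 1) → ℝ :=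
  fun i =>
    if (i : ℕ) = 0 then s 0 - min (s 0) z + s 1
    else if h : (i : ℕ) = L then min (s 0) z
    else s ⟨(i : ℕ) + 1, by have := i.isLt; omega⟩

/-- The trajectory of the Markov reward process driven by the (0-indexed) demand
sequence `d`, started at `s₁`; `mrpTraj L d s₁ t` is the state at (1-indexed) time `t+1`. -/
noncomputable def mrpTraj (L : ℕ) (d : ℕ → ℝ) (s₁ : Fin (L + 1) → ℝ) : ℕ → Fin (L + 1) → ℝ
  | 0 => s₁
  | t + 1 => mrpStep L (mrpTraj L d s₁ t) (d t)

/-- Membership in the state space `S^x`: nonnegative entries summing to `x`. -/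
def memS (L : ℕ) (x : ℝ) (s : Fin (L + 1) → ℝ) : Prop :=
  (∀ i, 0 ≤ s i) ∧ ∑ i, s i = x

/-- On-hand inventory `I` at (0-indexed) time `t`. -/
noncomputable def onHand (L : ℕ) (d : ℕ → ℝ) (s₁ : Fin (L + 1) → ℝ) (t : ℕ) : ℝ :=
  mrpTraj L d s₁ t 0

/-- Sales `y = min(I, d)` at (0-indexed) time `t`. -/
noncomputable def sales (L : ℕ) (d : ℕ → ℝ) (s₁ : Fin (L + 1) → ℝ) (t : ℕ) : ℝ :=
  min (onHand L d s₁ t) (d t)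

/-- Pseudo-cost `C = h (I - y) - p y` at (0-indexed) time `t`. -/
noncomputable def pcost (L : ℕ) (h p : ℝ) (d : ℕ → ℝ) (s₁ : Fin (L + 1) → ℝ) (t : ℕ) : ℝ :=
  h * (onHand L d s₁ t - sales L d s₁ t) - p * sales L d s₁ t

/-- The dominance relation: `succeq L s' s` means `s' ⪰ s`, i.e. with
`δ i = s' i - s i`, there is `k ∈ {0, …, L-1}` with `δ i ≥ 0` for `i ≤ k`
and `δ i ≤ 0` for `k < i`. -/
def succeq (L : ℕ) (s' s : Fin (L + 1) → ℝ) : Prop :=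
  ∃ k : ℕ, k < L ∧ (∀ i : Fin (L + 1), (i : ℕ) ≤ k → s i ≤ s' i) ∧
    ∀ i : Fin (L + 1), k < (i : ℕ) → s' i ≤ s i


/-- Entries initially in the pipeline just shift: position `i ≥ 1` after `t` steps holds the
initial entry `i + t`, as long as that entry exists. -/
lemma mrpTraj_pipeline (L : ℕ) (d : ℕ → ℝ) (s : Fin (L + 1) → ℝ) (t : ℕ) :
    ∀ (i : ℕ) (_ : 1 ≤ i) (h : i + t ≤ L),
      mrpTraj L d s t ⟨i, by omega⟩ = s ⟨i + t, by omega⟩ := by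
  induction t with
  | zero => intro i _ _; rfl
  | succ t ih =>
    intro i h1 h
    have h0 : i ≠ 0 := by omega
    have hiL : i ≠ L := by omega
    simp only [mrpTraj, mrpStep, h0, hiL, if_false, dite_false]
    rw [ih (i + 1) (by omega) (by omega)]
    congr 2
    omega

/-- The sales of time `u` enter the pipeline at position `L` one step later, and sit at position
`L - j` after `j` further steps. -/
lemma mrpTraj_sales (L : ℕ) (d : ℕ → ℝ) (s : Fin (L + 1) → ℝ) (u j : ℕ) (hj : j < L) :
    mrpTraj L d s (u + 1 + j) ⟨L - j, by omega⟩ = sales L d s u := by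
  induction j with
  | zero =>
    have h0 : L ≠ 0 := by omega
    simp [mrpTraj, mrpStep, h0, sales, onHand]
  | succ j ih =>
    have h0 : L - (j + 1) ≠ 0 := by omega
    have hiL : L - (j + 1) ≠ L := by omega
    rw [← ih (by omega), ← Nat.add_assoc]
    simp only [mrpTraj, mrpStep, h0, hiL, if_false, dite_false]
    congr 2
    omega

lemma onHand_succ (L : ℕ) (d : ℕ → ℝ) (s : Fin (L + 1) → ℝ) (t : ℕ) (h : t + 1 ≤ L) :
    onHand L d s (t + 1) = onHand L d s t - sales L d s t + s ⟨t + 1, by omega⟩ := by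
  have e1 : (1 : Fin (L + 1)) = ⟨1, by omega⟩ := by
    ext
    simp only [Fin.val_one']
    exact Nat.mod_eq_of_lt (by omega)
  have e := mrpTraj_pipeline L d s t 1 le_rfl (by omega)
  simp only [onHand, sales, mrpTraj, mrpStep, Fin.val_zero, if_true]
  rw [e1, e]
  simp only [Nat.add_comm 1 t]

/-- if `s₁' ⪰ s₁` and `τ` (0-indexed, `1 ≤ τ ≤ L`, i.e. 1-indexed
`2 ≤ τ ≤ L+1`) is a time where on-hand dominance first reverses (`I'_t ≥ I_t`
for all `t < τ` and `I'_τ < I_τ`), then the dominance reverses: `s_τ ⪰ s'_τ`. -/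
theorem dominance_reversal (L : ℕ) (hL : 1 ≤ L) (x : ℝ) (hx : 0 ≤ x)
    (d : ℕ → ℝ) (hd : ∀ t, 0 ≤ d t)
    (s₁ s₁' : Fin (L + 1) → ℝ) (hs₁ : memS L x s₁) (hs₁' : memS L x s₁')
    (hdom : succeq L s₁' s₁) (τ : ℕ) (hτ1 : 1 ≤ τ) (hτ2 : τ ≤ L)
    (hbefore : ∀ t, t < τ → onHand L d s₁ t ≤ onHand L d s₁' t)
    (hat : onHand L d s₁' τ < onHand L d s₁ τ) :
    succeq L (mrpTraj L d s₁ τ) (mrpTraj L d s₁' τ) := by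
  obtain ⟨k, -, hk1, hk2⟩ := hdom
  have hkτ : k < τ := by
    by_contra hcon
    obtain ⟨t, rfl⟩ : ∃ t, τ = t + 1 := ⟨τ - 1, by omega⟩
    rw [onHand_succ L d s₁ t hτ2, onHand_succ L d s₁' t hτ2] at hat
    have hb := hbefore t (by omega)
    have ha := hk1 ⟨t + 1, by omega⟩ (by simpa using hcon)
    have hm : onHand L d s₁ t - sales L d s₁ t ≤ onHand L d s₁' t - sales L d s₁' t := by
      unfold sales
      rcases min_cases (onHand L d s₁ t) (d t) with h | h <;>
        rcases min_cases (onHand L d s₁' t) (d t) with h' | h' <;> linarith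
    linarith
  refine ⟨L - τ, by omega, ?_, ?_⟩
  · rintro ⟨i, hi⟩ hle
    simp only at hle
    rcases Nat.eq_zero_or_pos i with rfl | hpos
    · exact hat.le
    · rw [mrpTraj_pipeline L d s₁ τ i hpos (by omega),
        mrpTraj_pipeline L d s₁' τ i hpos (by omega)]
      exact hk2 _ (by simp only; omega)
  · rintro ⟨i, hi⟩ hlt
    simp only at hlt
    -- position `i` holds the sales of time `u`, made `j + 1` steps before `τ`
    obtain ⟨j, hj, rfl⟩ : ∃ j, j < L ∧ i = L - j := ⟨L - i, by omega, by omega⟩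
    obtain ⟨u, rfl⟩ : ∃ u, τ = u + 1 + j := ⟨τ - 1 - j, by omega⟩
    rw [mrpTraj_sales L d s₁ u j hj, mrpTraj_sales L d s₁' u j hj]
    exact min_le_min_right _ (hbefore u (by omega))
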